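/- arXiv:2506.07780 — 2 statements merged into one kernel-verified Lean document; each statement's English description precedes it below -/
import Mathlib

section
/- Let v : ℝ → ℝ → ℝ be a smooth function of (x,t) with v(x,t) ≠ 0 and v_x(x,t) ≠ 0 for all (x,t), satisfying the 3rd potential Kupershmidt equation v_t = v_{5x} - 5·v_{xx}v_{4x}/v_x + 5·v_{xx}²v_{xxx}/v_x². Then both S := -v_{xxx}/v_x and S̄ := -v_{xxx}/v_x + 6·(v_{xx}/v - v_x²/v²) satisfy the Sawada-Kotera equation: S_t = S_{5x} + 5SS_{xxx} + 5S_xS_{xx} + 5S²S_x, and likewise with S replaced by S̄. -/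
/-- Total `x`-derivative of a function of `(x, t)`. -/
noncomputable def dx (f : ℝ → ℝ → ℝ) : ℝ → ℝ → ℝ := fun x t => deriv (fun y => f y t) x

/-- Total `t`-derivative of a function of `(x, t)`. -/
noncomputable def dt (f : ℝ → ℝ → ℝ) : ℝ → ℝ → ℝ := fun x t => deriv (fun s => f x s) t

/-- The Sawada-Kotera equation. -/
def SawadaKotera (S : ℝ → ℝ → ℝ) : Prop :=
  ∀ x t, dt S x t =
    dx (dx (dx (dx (dx S)))) x t
    + 5 * S x t * dx (dx (dx S)) x t
    + 5 * dx S x t * dx (dx S) x t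
    + 5 * (S x t)^2 * dx S x t

/-- The 3rd potential Kupershmidt equation. -/
def Kup3 (v : ℝ → ℝ → ℝ) : Prop :=
  ∀ x t, dt v x t =
    dx (dx (dx (dx (dx v)))) x t
    - 5 * dx (dx v) x t * dx (dx (dx (dx v))) x t / dx v x t
    + 5 * (dx (dx v) x t)^2 * dx (dx (dx v)) x t / (dx v x t)^2

/-!
The 3rd potential Kupershmidt equation reads `v_t / v_x = σ_xx + 4 σ²`, where
`σ = u_x - u² / 2`, `u = v_xx / v_x`, is the Schwarzian derivative of `v`. Differentiating it shows
that `u` solves the Fordy-Gibbons equation, and the Miura map `u ↦ -(u_x + u²) = -v_xxx / v_x` sends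
solutions of the latter to solutions of the Sawada-Kotera equation. As the Schwarzian derivative is
invariant under Möbius transformations of `v`, `1 / v` is again a solution of the Kupershmidt
equation, and the Sawada-Kotera solution attached to `1 / v` is `S + 6 [ln v]_xx`.
-/

open scoped ContDiff

section DifferentialAlgebra

variable {R A : Type*} [CommRing R] [CommRing A] [Algebra R A] (D T : Derivation R A A)

lemma derivation_ofNat (n : ℕ) [n.AtLeastTwo] : D (ofNat(n) : A) = 0 :=
  D.map_natCast n

/-- The logarithmic derivative `D a / a` of a unit `a`. -/
def logDer (a : Aˣ) : A := ↑a⁻¹ * D a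

lemma derivation_unit_eq_mul_logDer (a : Aˣ) : D a = a * logDer D a :=
  (a.mul_inv_cancel_left _).symm

lemma logDer_eq_iff {a : Aˣ} {b : A} : logDer D a = b ↔ D a = a * b :=
  a.inv_mul_eq_iff_eq_mul

lemma logDer_mul (a b : Aˣ) : logDer D (a * b) = logDer D a + logDer D b := by
  rw [logDer_eq_iff, Units.val_mul, D.leibniz, derivation_unit_eq_mul_logDer D a,
    derivation_unit_eq_mul_logDer D b]
  simp only [smul_eq_mul]
  ring

lemma logDer_neg (a : Aˣ) : logDer D (-a) = logDer D a := by
  simp [logDer]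

lemma logDer_inv (a : Aˣ) : logDer D a⁻¹ = -logDer D a := by
  rw [logDer_eq_iff, D.leibniz_of_mul_eq_one a.inv_mul, logDer]
  simp only [smul_eq_mul]
  ring

lemma logDer_neg_mul_inv_sq (p v : Aˣ) :
    logDer D (-(p * v⁻¹ ^ 2)) = logDer D p - 2 * logDer D v := by
  rw [logDer_neg, sq, logDer_mul, logDer_mul, logDer_inv]
  ring

lemma logDer_comm {D T : Derivation R A A} (hTD : Function.Commute T D) (a : Aˣ) :
    T (logDer D a) = D (logDer T a) := by
  simp only [logDer, D.leibniz, T.leibniz, D.leibniz_of_mul_eq_one a.inv_mul,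
    T.leibniz_of_mul_eq_one a.inv_mul, hTD.eq, smul_eq_mul]
  ring

lemma derivation_logDer {v p : Aˣ} (hp : D v = p) :
    D (logDer D v) = logDer D v * logDer D p - logDer D v ^ 2 := by
  have hv : logDer D v = ↑(v⁻¹ * p) := by rw [logDer, hp, Units.val_mul]
  nth_rw 1 [hv]
  rw [derivation_unit_eq_mul_logDer, ← hv, logDer_mul, logDer_inv]
  ring

lemma derivation_inv_eq {v p : Aˣ} (hp : D v = p) : D ↑v⁻¹ = ↑(-(p * v⁻¹ ^ 2)) := by
  rw [D.leibniz_of_mul_eq_one v.inv_mul, hp]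
  push_cast
  simp only [smul_eq_mul]
  ring

/-- The Sawada-Kotera equation in a ring with derivations `D = ∂ₓ` and `T = ∂ₜ`. -/
def IsSawadaKotera (S : A) : Prop :=
  T S = D (D (D (D (D S)))) + 5 * S * D (D (D S)) + 5 * D S * D (D S) + 5 * S ^ 2 * D S

/-- The Fordy-Gibbons equation, satisfied by `u = v_xx / v_x` when `v` solves the 3rd potential
Kupershmidt equation. -/
def IsFordyGibbons (u : A) : Prop :=
  T u = D (D (D (D (D u))) + 5 * D u * D (D u) - 5 * u * D u ^ 2 - 5 * u ^ 2 * D (D u) + u ^ 5)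

/-- The 3rd potential Kupershmidt equation for `v`, in a ring with derivations `D = ∂ₓ` and
`T = ∂ₜ`. The unit `p` is `v_x`, so that division by `v_x` makes sense. -/
structure IsKupershmidt (v : A) (p : Aˣ) : Prop where
  deriv_eq : D v = p
  evolution : T v = D (D (D (D p))) - 5 * D p * D (D (D p)) * ↑p⁻¹
    + 5 * D p ^ 2 * D (D p) * ↑p⁻¹ ^ 2

/-- The Sawada-Kotera potential `S = -v_xxx / v_x`, as a function of `p = v_x`. -/
def kupershmidtMiura (p : Aˣ) : A := -D (D p) * ↑p⁻¹

/-- The Schwarzian derivative `(v_xx / v_x)_x - (v_xx / v_x)² / 2` of `v`, as a function of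
`p = v_x`. -/
def schwarzian [Invertible (2 : A)] (p : Aˣ) : A := D (logDer D p) - ⅟2 * logDer D p ^ 2

/-- The velocity `v_t / v_x` prescribed by the 3rd potential Kupershmidt equation, as a function of
`p = v_x`. -/
def kupershmidtVelocity [Invertible (2 : A)] (p : Aˣ) : A :=
  D (D (schwarzian D p)) + 4 * schwarzian D p ^ 2

theorem IsFordyGibbons.isSawadaKotera {D T : Derivation R A A} (hTD : Function.Commute T D) {u : A}
    (hu : IsFordyGibbons D T u) : IsSawadaKotera D T (-(D u + u ^ 2)) := by
  unfold IsFordyGibbons at hu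
  simp only [IsSawadaKotera, map_neg, map_add, map_sub, hTD.eq, hu, D.leibniz, T.leibniz,
    smul_eq_mul, pow_succ, pow_zero, one_mul, derivation_ofNat, mul_zero, add_zero]
  ring

lemma derivation_derivation_unit (p : Aˣ) :
    D (D p) = p * (D (logDer D p) + logDer D p ^ 2) := by
  simp only [derivation_unit_eq_mul_logDer, D.leibniz, smul_eq_mul]
  ring

lemma kupershmidtMiura_eq (p : Aˣ) :
    kupershmidtMiura D p = -(D (logDer D p) + logDer D p ^ 2) := by
  rw [kupershmidtMiura, derivation_derivation_unit]
  linear_combination -(D (logDer D p) + logDer D p ^ 2) * p.mul_inv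

lemma kupershmidtMiura_inv {v p : Aˣ} (hp : D v = p) :
    kupershmidtMiura D (-(p * v⁻¹ ^ 2)) =
      kupershmidtMiura D p + 6 * (D p * ↑v⁻¹ - ↑p ^ 2 * ↑v⁻¹ ^ 2) := by
  have hw : logDer D v = ↑v⁻¹ * p := by rw [logDer, hp]
  simp only [kupershmidtMiura_eq, logDer_neg_mul_inv_sq, map_sub, D.leibniz, derivation_ofNat,
    smul_eq_mul, derivation_logDer D hp, derivation_unit_eq_mul_logDer D p]
  rw [hw]
  ring

section Schwarzian

variable [Invertible (2 : A)]

lemma kupershmidtVelocity_eq (p : Aˣ) {u : A} (hu : logDer D p = u) :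
    kupershmidtVelocity D p =
      D (D (D u)) - u * D (D u) + 3 * D u ^ 2 - 4 * u ^ 2 * D u + u ^ 4 := by
  have half_const : D (⅟2 : A) = 0 := by rw [D.leibniz_invOf, derivation_ofNat, smul_zero]
  simp only [kupershmidtVelocity, schwarzian, hu, map_sub, map_add, sq, D.leibniz, half_const,
    smul_eq_mul, mul_zero, add_zero]
  linear_combination (-u * D (D u) - D u ^ 2 - 4 * u ^ 2 * D u + u ^ 4 * (2 * ⅟2 + 1))
    * mul_invOf_self (2 : A)

lemma kupershmidt_evolution_eq (p : Aˣ) :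
    D (D (D (D p))) - 5 * D p * D (D (D p)) * ↑p⁻¹ + 5 * D p ^ 2 * D (D p) * ↑p⁻¹ ^ 2 =
      p * kupershmidtVelocity D p := by
  rw [kupershmidtVelocity_eq D p rfl]
  set u := logDer D p
  have p_x : D p = p * u := derivation_unit_eq_mul_logDer D p
  have p_xx : D (D p) = p * (D u + u ^ 2) := derivation_derivation_unit D p
  have p_xxx : D (D (D p)) = p * (D (D u) + 3 * u * D u + u ^ 3) := by
    rw [p_xx]
    simp only [p_x, D.leibniz, map_add, smul_eq_mul, sq]
    ring
  have p_xxxx : D (D (D (D p))) =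
      p * (D (D (D u)) + 4 * u * D (D u) + 3 * D u ^ 2 + 6 * u ^ 2 * D u + u ^ 4) := by
    rw [p_xxx]
    simp only [p_x, D.leibniz, map_add, smul_eq_mul, pow_succ, pow_zero, one_mul,
      derivation_ofNat, mul_zero, add_zero]
    ring
  rw [p_xxxx, p_xxx, p_xx, p_x]
  linear_combination (-5 * u * (D (D u) + 3 * u * D u + u ^ 3) * p
    + 5 * u ^ 2 * (D u + u ^ 2) * p * (p * ↑p⁻¹ + 1)) * p.mul_inv

lemma schwarzian_inv {v p : Aˣ} (hp : D v = p) :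
    schwarzian D (-(p * v⁻¹ ^ 2)) = schwarzian D p := by
  simp only [schwarzian, logDer_neg_mul_inv_sq, map_sub, D.leibniz, derivation_ofNat,
    smul_eq_mul, derivation_logDer D hp]
  linear_combination
    2 * (logDer D v * logDer D p - logDer D v ^ 2) * mul_invOf_self (2 : A)

variable {D T}

lemma isKupershmidt_iff {v : A} {p : Aˣ} :
    IsKupershmidt D T v p ↔ D v = p ∧ T v = p * kupershmidtVelocity D p := by
  rw [← kupershmidt_evolution_eq]
  exact ⟨fun h => ⟨h.deriv_eq, h.evolution⟩, fun h => ⟨h.1, h.2⟩⟩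

theorem IsKupershmidt.inv {v p : Aˣ} (h : IsKupershmidt D T v p) :
    IsKupershmidt D T ↑v⁻¹ (-(p * v⁻¹ ^ 2)) := by
  obtain ⟨hp, hT⟩ := isKupershmidt_iff.1 h
  refine isKupershmidt_iff.2 ⟨derivation_inv_eq D hp, ?_⟩
  rw [kupershmidtVelocity, schwarzian_inv D hp, ← kupershmidtVelocity,
    T.leibniz_of_mul_eq_one v.inv_mul, hT]
  push_cast
  simp only [smul_eq_mul]
  ring

theorem IsKupershmidt.isFordyGibbons (hTD : Function.Commute T D) {v : A} {p : Aˣ}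
    (h : IsKupershmidt D T v p) : IsFordyGibbons D T (logDer D p) := by
  obtain ⟨hp, hT⟩ := isKupershmidt_iff.1 h
  have logDer_T : logDer T p =
      D (kupershmidtVelocity D p) + logDer D p * kupershmidtVelocity D p := by
    rw [logDer_eq_iff, ← hp, hTD.eq, hT, D.leibniz, hp, derivation_unit_eq_mul_logDer D p]
    simp only [smul_eq_mul]
    ring
  rw [IsFordyGibbons, logDer_comm hTD, logDer_T, kupershmidtVelocity_eq D p rfl]
  congr 1
  simp only [map_add, map_sub, D.leibniz, smul_eq_mul, pow_succ, pow_zero, one_mul,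
    derivation_ofNat, mul_zero, add_zero]
  ring

theorem IsKupershmidt.isSawadaKotera (hTD : Function.Commute T D) {v : A} {p : Aˣ}
    (h : IsKupershmidt D T v p) : IsSawadaKotera D T (kupershmidtMiura D p) := by
  rw [kupershmidtMiura_eq]
  exact (h.isFordyGibbons hTD).isSawadaKotera hTD

end Schwarzian

end DifferentialAlgebra

section SmoothFunctions

variable (𝕜 : Type*) [NontriviallyNormedField 𝕜]
  (E : Type*) [NormedAddCommGroup E] [NormedSpace 𝕜 E]

/-- The algebra of smooth scalar functions on a normed space. -/
def smoothFunctions : Subalgebra 𝕜 (E → 𝕜) where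
  carrier := {f | ContDiff 𝕜 ∞ f}
  mul_mem' (hf : ContDiff 𝕜 ∞ _) (hg : ContDiff 𝕜 ∞ _) := hf.mul hg
  add_mem' (hf : ContDiff 𝕜 ∞ _) (hg : ContDiff 𝕜 ∞ _) := hf.add hg
  algebraMap_mem' _ := show ContDiff 𝕜 ∞ _ from contDiff_const

variable {𝕜 E}

lemma contDiff_smoothFunctions (f : smoothFunctions 𝕜 E) : ContDiff 𝕜 ∞ (f : E → 𝕜) :=
  f.2

lemma differentiableAt_smoothFunctions (f : smoothFunctions 𝕜 E) (z : E) :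
    DifferentiableAt 𝕜 (f : E → 𝕜) z :=
  (contDiff_smoothFunctions f).differentiable (by simp) z

lemma differentiableAt_fderiv_smoothFunctions (f : smoothFunctions 𝕜 E) (z : E) :
    DifferentiableAt 𝕜 (fderiv 𝕜 (f : E → 𝕜)) z :=
  ((contDiff_smoothFunctions f).fderiv_right (m := ∞) (by simp)).differentiable (by simp) z

/-- A nowhere vanishing smooth function, as a unit of the algebra of smooth functions. -/
def smoothUnit (f : smoothFunctions 𝕜 E) (hf : ∀ z, (f : E → 𝕜) z ≠ 0) :
    (smoothFunctions 𝕜 E)ˣ where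
  val := f
  inv := ⟨fun z => ((f : E → 𝕜) z)⁻¹, (contDiff_smoothFunctions f).inv hf⟩
  val_inv := Subtype.ext <| funext fun z => mul_inv_cancel₀ (hf z)
  inv_val := Subtype.ext <| funext fun z => inv_mul_cancel₀ (hf z)

variable (𝕜) in
/-- The directional derivative along `e`, as a derivation of the algebra of smooth functions. -/
noncomputable def dirDeriv (e : E) :
    Derivation 𝕜 (smoothFunctions 𝕜 E) (smoothFunctions 𝕜 E) :=
  Derivation.mk'
    { toFun f := ⟨fun z => fderiv 𝕜 (f : E → 𝕜) z e,
        ((contDiff_smoothFunctions f).fderiv_right (m := ∞) (by simp)).clm_apply contDiff_const⟩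
      map_add' f g := by
        ext z
        exact DFunLike.congr_fun (fderiv_add (differentiableAt_smoothFunctions f z)
          (differentiableAt_smoothFunctions g z)) e
      map_smul' c f := by
        ext z
        exact DFunLike.congr_fun
          (fderiv_const_smul (differentiableAt_smoothFunctions f z) c) e }
    fun f g => by
      ext z
      exact DFunLike.congr_fun (fderiv_mul (differentiableAt_smoothFunctions f z)
        (differentiableAt_smoothFunctions g z)) e

lemma dirDeriv_apply (e : E) (f : smoothFunctions 𝕜 E) (z : E) :
    (dirDeriv 𝕜 e f : E → 𝕜) z = fderiv 𝕜 (f : E → 𝕜) z e :=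
  rfl

lemma dirDeriv_comm [IsRCLikeNormedField 𝕜] (e e' : E) :
    Function.Commute (dirDeriv 𝕜 e) (dirDeriv 𝕜 e') := by
  intro f
  have fderiv_dirDeriv (a : E) (z : E) :
      fderiv 𝕜 (dirDeriv 𝕜 a f : E → 𝕜) z = (fderiv 𝕜 (fderiv 𝕜 (f : E → 𝕜)) z).flip a := by
    change fderiv 𝕜 (fun y => fderiv 𝕜 (f : E → 𝕜) y a) z = _
    simp [fderiv_clm_apply (differentiableAt_fderiv_smoothFunctions f z)]
  ext z
  have second_symm : IsSymmSndFDerivAt 𝕜 (f : E → 𝕜) z :=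
    (contDiff_smoothFunctions f).contDiffAt.isSymmSndFDerivAt (by
      rw [minSmoothness_of_isRCLikeNormedField]
      exact WithTop.coe_le_coe.2 le_top)
  simpa only [dirDeriv_apply, fderiv_dirDeriv, ContinuousLinearMap.flip_apply]
    using second_symm e e'

end SmoothFunctions

section Plane

/-- `∂ₓ` as a derivation of the algebra of smooth functions of `(x, t)`. -/
noncomputable abbrev derivX :
    Derivation ℝ (smoothFunctions ℝ (ℝ × ℝ)) (smoothFunctions ℝ (ℝ × ℝ)) :=
  dirDeriv ℝ (1, 0)

/-- `∂ₜ` as a derivation of the algebra of smooth functions of `(x, t)`. -/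
noncomputable abbrev derivT :
    Derivation ℝ (smoothFunctions ℝ (ℝ × ℝ)) (smoothFunctions ℝ (ℝ × ℝ)) :=
  dirDeriv ℝ (0, 1)

lemma dx_curry (f : smoothFunctions ℝ (ℝ × ℝ)) :
    dx (Function.curry f) = Function.curry (derivX f : ℝ × ℝ → ℝ) := by
  funext x t
  exact ((differentiableAt_smoothFunctions f (x, t)).hasFDerivAt.comp_hasDerivAt x
    ((hasDerivAt_id x).prodMk (hasDerivAt_const x t))).deriv

lemma dt_curry (f : smoothFunctions ℝ (ℝ × ℝ)) :
    dt (Function.curry f) = Function.curry (derivT f : ℝ × ℝ → ℝ) := by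
  funext x t
  exact ((differentiableAt_smoothFunctions f (x, t)).hasFDerivAt.comp_hasDerivAt t
    ((hasDerivAt_const t x).prodMk (hasDerivAt_id t))).deriv

lemma IsSawadaKotera.sawadaKotera {S : smoothFunctions ℝ (ℝ × ℝ)}
    (h : IsSawadaKotera derivX derivT S) :
    SawadaKotera (Function.curry S) := by
  intro x t
  simp only [dx_curry, dt_curry]
  exact congrFun (congrArg Subtype.val h) (x, t)

lemma Kup3.isKupershmidt {v : smoothFunctions ℝ (ℝ × ℝ)} (h : Kup3 (Function.curry v))
    (hvx : ∀ z, (derivX v : ℝ × ℝ → ℝ) z ≠ 0) :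
    IsKupershmidt derivX derivT v (smoothUnit _ hvx) where
  deriv_eq := rfl
  evolution := by
    ext ⟨x, t⟩
    have evolution_at := h x t
    simp only [dx_curry, dt_curry, div_eq_mul_inv, ← inv_pow] at evolution_at
    exact evolution_at

end Plane

/-- Proposition 4 g): `S = -v_xxx/v_x` and `S̄ = S + 6[ln v]_xx` both solve the
Sawada-Kotera equation. -/
theorem sawada_kotera_nonlocal_invariance
    (v : ℝ → ℝ → ℝ)
    (hv : ContDiff ℝ (⊤ : ℕ∞) (fun p : ℝ × ℝ => v p.1 p.2))
    (hne : ∀ x t, v x t ≠ 0)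
    (hvx : ∀ x t, dx v x t ≠ 0)
    (heq : Kup3 v) :
    SawadaKotera (fun x t => -(dx (dx (dx v)) x t) / dx v x t) ∧
    SawadaKotera (fun x t => -(dx (dx (dx v)) x t) / dx v x t
      + 6 * (dx (dx v) x t / v x t - (dx v x t)^2 / (v x t)^2)) := by
  let V : smoothFunctions ℝ (ℝ × ℝ) := ⟨Function.uncurry v, hv⟩
  have dx_v : dx v = Function.curry (derivX V : ℝ × ℝ → ℝ) := dx_curry V
  let unitV := smoothUnit V fun z => hne z.1 z.2
  have V_kup : IsKupershmidt derivX derivT unitV.val (smoothUnit _ _) :=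
    heq.isKupershmidt (v := V) fun z => by simpa only [dx_v, Function.curry_apply] using hvx z.1 z.2
  let _ : Invertible (2 : smoothFunctions ℝ (ℝ × ℝ)) :=
    Invertible.map (algebraMap ℝ (smoothFunctions ℝ (ℝ × ℝ))) 2
  have commute : Function.Commute derivT derivX := dirDeriv_comm _ _
  have S_sol := (V_kup.isSawadaKotera commute).sawadaKotera
  have S_bar_sol := (V_kup.inv.isSawadaKotera commute).sawadaKotera
  rw [kupershmidtMiura_inv _ V_kup.deriv_eq] at S_bar_sol
  simp only [dx_v, dx_curry, div_eq_mul_inv, ← inv_pow]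
  exact ⟨S_sol, S_bar_sol⟩
end

section
/- Let K : ℝ → ℝ → ℝ be a smooth function of (x,t) satisfying the Kupershmidt equation K_t = K_{5x} - 5K_xK_{xxx} - 5K_{xx}² - 5K²K_{xxx} - 20KK_xK_{xx} - 5K_x³ + 5K⁴K_x. Then k := -K_x - (1/2)K² satisfies the k-equation k_t = k_{5x} + 10kk_{xxx} + 25k_xk_{xx} + 20k²k_x. -/
/-- The Kupershmidt equation. -/
def Kupershmidt (K : ℝ → ℝ → ℝ) : Prop :=
  ∀ x t, dt K x t =
    dx (dx (dx (dx (dx K)))) x t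
    - 5 * dx K x t * dx (dx (dx K)) x t
    - 5 * (dx (dx K) x t)^2
    - 5 * (K x t)^2 * dx (dx (dx K)) x t
    - 20 * K x t * dx K x t * dx (dx K) x t
    - 5 * (dx K x t)^3
    + 5 * (K x t)^4 * dx K x t

/-- The `k`-equation. -/
def KEq (k : ℝ → ℝ → ℝ) : Prop :=
  ∀ x t, dt k x t =
    dx (dx (dx (dx (dx k)))) x t
    + 10 * k x t * dx (dx (dx k)) x t
    + 25 * dx k x t * dx (dx k) x t
    + 20 * (k x t)^2 * dx k x t

/-!
For a fixed time, the linearization of `u ↦ -u' - u²/2` sends a variation `v` to `-v' - u v`.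
As mixed partial derivatives commute, `k_t = -(K_t)_x - K K_t`, so substituting the Kupershmidt
equation turns the claim into an identity between two differential polynomials in `K(·, t)`.
-/

open Function

section PartialDerivatives

variable {f : ℝ → ℝ → ℝ} {x t : ℝ} {n : WithTop ℕ∞}

lemma hasDerivAt_uncurry_left (hf : DifferentiableAt ℝ (uncurry f) (x, t)) :
    HasDerivAt (fun y => f y t) (fderiv ℝ (uncurry f) (x, t) (1, 0)) x :=
  HasFDerivAt.comp_hasDerivAt (f := fun y => (y, t)) x hf.hasFDerivAt
    ((hasDerivAt_id x).prodMk (hasDerivAt_const x t))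

lemma hasDerivAt_uncurry_right (hf : DifferentiableAt ℝ (uncurry f) (x, t)) :
    HasDerivAt (fun s => f x s) (fderiv ℝ (uncurry f) (x, t) (0, 1)) t :=
  HasFDerivAt.comp_hasDerivAt (f := fun s => (x, s)) t hf.hasFDerivAt
    ((hasDerivAt_const t x).prodMk (hasDerivAt_id t))

lemma hasDerivAt_dt (hf : DifferentiableAt ℝ (uncurry f) (x, t)) :
    HasDerivAt (fun s => f x s) (dt f x t) t :=
  (hasDerivAt_uncurry_right hf).differentiableAt.hasDerivAt

lemma uncurry_dx (hf : Differentiable ℝ (uncurry f)) :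
    uncurry (dx f) = fun p => fderiv ℝ (uncurry f) p (1, 0) :=
  funext fun p => (hasDerivAt_uncurry_left (hf p)).deriv

lemma uncurry_dt (hf : Differentiable ℝ (uncurry f)) :
    uncurry (dt f) = fun p => fderiv ℝ (uncurry f) p (0, 1) :=
  funext fun p => (hasDerivAt_uncurry_right (hf p)).deriv

lemma contDiff_dx (hf : ContDiff ℝ (n + 1) (uncurry f)) : ContDiff ℝ n (uncurry (dx f)) := by
  rw [uncurry_dx (hf.differentiable (by simp))]
  exact (hf.fderiv_right le_rfl).clm_apply contDiff_const

lemma contDiff_dt (hf : ContDiff ℝ (n + 1) (uncurry f)) : ContDiff ℝ n (uncurry (dt f)) := by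
  rw [uncurry_dt (hf.differentiable (by simp))]
  exact (hf.fderiv_right le_rfl).clm_apply contDiff_const

lemma dt_dx_comm (hf : ContDiff ℝ 2 (uncurry f)) : dt (dx f) = dx (dt f) := by
  have hf' : ContDiff ℝ (1 + 1) (uncurry f) := by simpa only [one_add_one_eq_two] using hf
  have hdf : Differentiable ℝ (fderiv ℝ (uncurry f)) :=
    (hf'.fderiv_right le_rfl).differentiable one_ne_zero
  have hsymm (p : ℝ × ℝ) : IsSymmSndFDerivAt ℝ (uncurry f) p :=
    hf.contDiffAt.isSymmSndFDerivAt (by simp)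
  have fderiv_apply (p v w : ℝ × ℝ) :
      fderiv ℝ (fun q => fderiv ℝ (uncurry f) q v) p w =
        fderiv ℝ (fderiv ℝ (uncurry f)) p w v := by
    simp [fderiv_clm_apply (hdf p) (differentiableAt_const v)]
  apply uncurry_injective
  rw [uncurry_dt ((contDiff_dx hf').differentiable one_ne_zero),
    uncurry_dx ((contDiff_dt hf').differentiable one_ne_zero),
    uncurry_dx (hf.differentiable two_ne_zero), uncurry_dt (hf.differentiable two_ne_zero)]
  funext p
  rw [fderiv_apply, fderiv_apply, hsymm p]

lemma iterate_dx_apply (f : ℝ → ℝ → ℝ) (m : ℕ) (x t : ℝ) :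
    dx^[m] f x t = iteratedDeriv m (fun y => f y t) x := by
  induction m generalizing x with
  | zero => simp
  | succ m ih =>
    rw [iterate_succ_apply', iteratedDeriv_succ, ← funext ih]
    rfl

end PartialDerivatives

section DifferentialPolynomials

variable {𝕜 : Type*} [NontriviallyNormedField 𝕜] {u : 𝕜 → 𝕜}

lemma hasDerivAt_iteratedDeriv {E : Type*} [NormedAddCommGroup E] [NormedSpace 𝕜 E] {f : 𝕜 → E}
    {n : WithTop ℕ∞} {m : ℕ} (hf : ContDiff 𝕜 n f) (hm : m < n) (x : 𝕜) :
    HasDerivAt (iteratedDeriv m f) (iteratedDeriv (m + 1) f x) x := by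
  rw [iteratedDeriv_succ]
  exact (hf.differentiable_iteratedDeriv m hm x).hasDerivAt

/-- The Miura map `u ↦ -u' - u²/2` on functions of one variable. -/
noncomputable def miura (u : 𝕜 → 𝕜) : 𝕜 → 𝕜 :=
  fun x => -deriv u x - (1 / 2) * u x ^ 2

/-- The right-hand side of the Kupershmidt equation, as a differential polynomial in a function of
the space variable alone. -/
noncomputable def kupershmidtFlow (u : 𝕜 → 𝕜) : 𝕜 → 𝕜 := fun x =>
  iteratedDeriv 5 u x
    - 5 * iteratedDeriv 1 u x * iteratedDeriv 3 u x
    - 5 * iteratedDeriv 2 u x ^ 2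
    - 5 * u x ^ 2 * iteratedDeriv 3 u x
    - 20 * u x * iteratedDeriv 1 u x * iteratedDeriv 2 u x
    - 5 * iteratedDeriv 1 u x ^ 3
    + 5 * u x ^ 4 * iteratedDeriv 1 u x

/-- The right-hand side of the `k`-equation, as a differential polynomial in a function of the
space variable alone. -/
noncomputable def kEquationFlow (u : 𝕜 → 𝕜) : 𝕜 → 𝕜 := fun x =>
  iteratedDeriv 5 u x
    + 10 * u x * iteratedDeriv 3 u x
    + 25 * iteratedDeriv 1 u x * iteratedDeriv 2 u x
    + 20 * u x ^ 2 * iteratedDeriv 1 u x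

lemma iteratedDeriv_miura {n : ℕ} (hu : ContDiff 𝕜 (n + 1) u) (x : 𝕜) :
    iteratedDeriv n (miura u) x = -iteratedDeriv (n + 1) u x - (1 / 2) *
      ∑ i ∈ Finset.range (n + 1), n.choose i * iteratedDeriv i u x * iteratedDeriv (n - i) u x := by
  have hun : ContDiffAt 𝕜 n u x := (hu.of_le le_self_add).contDiffAt
  have hu' : ContDiffAt 𝕜 n (-deriv u) x := (contDiff_succ_iff_deriv.1 hu).2.2.neg.contDiffAt
  have hmiura : miura u = -deriv u - fun y => (1 / 2) * (u * u) y := by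
    funext y
    simp [miura, sq]
  have hsq : ContDiffAt 𝕜 n (fun y => (1 / 2) * (u * u) y) x :=
    contDiffAt_const.mul (hun.mul hun)
  rw [hmiura, iteratedDeriv_sub hu' hsq, iteratedDeriv_neg, iteratedDeriv_const_mul_field,
    iteratedDeriv_mul hun hun, iteratedDeriv_succ']

lemma hasDerivAt_kupershmidtFlow (hu : ContDiff 𝕜 6 u) (x : 𝕜) :
    HasDerivAt (kupershmidtFlow u)
      (iteratedDeriv 6 u x
        - 5 * iteratedDeriv 1 u x * iteratedDeriv 4 u x
        - 15 * iteratedDeriv 2 u x * iteratedDeriv 3 u x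
        - 5 * u x ^ 2 * iteratedDeriv 4 u x
        - 30 * u x * iteratedDeriv 1 u x * iteratedDeriv 3 u x
        - 20 * u x * iteratedDeriv 2 u x ^ 2
        - 35 * iteratedDeriv 1 u x ^ 2 * iteratedDeriv 2 u x
        + 5 * u x ^ 4 * iteratedDeriv 2 u x
        + 20 * u x ^ 3 * iteratedDeriv 1 u x ^ 2) x := by
  have hasDeriv (m : ℕ) (hm : m < 6) :
      HasDerivAt (iteratedDeriv m u) (iteratedDeriv (m + 1) u x) x :=
    hasDerivAt_iteratedDeriv hu (by exact_mod_cast hm) x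
  have h0 : HasDerivAt u (iteratedDeriv 1 u x) x := by simpa using hasDeriv 0 (by norm_num)
  have h1 := hasDeriv 1 (by norm_num)
  have h2 := hasDeriv 2 (by norm_num)
  have h3 := hasDeriv 3 (by norm_num)
  have h5 := hasDeriv 5 (by norm_num)
  refine HasDerivAt.congr_deriv
    ((((((h5.sub ((h1.const_mul 5).mul h3)).sub ((h2.pow 2).const_mul 5)).sub
      (((h0.pow 2).const_mul 5).mul h3)).sub (((h0.const_mul 20).mul h1).mul h2)).sub
      ((h1.pow 3).const_mul 5)).add (((h0.pow 4).const_mul 5).mul h1)) ?_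
  simp only [Pi.mul_apply, Pi.pow_apply]
  push_cast
  ring

theorem kEquationFlow_miura [CharZero 𝕜] (hu : ContDiff 𝕜 6 u) (x : 𝕜) :
    kEquationFlow (miura u) x = -deriv (kupershmidtFlow u) x - u x * kupershmidtFlow u x := by
  have leibniz (n : ℕ) (hn : n + 1 ≤ 6) :=
    iteratedDeriv_miura (n := n) (hu.of_le (by exact_mod_cast hn)) x
  rw [(hasDerivAt_kupershmidtFlow hu x).deriv, kEquationFlow, leibniz 5 (by norm_num),
    leibniz 3 (by norm_num), leibniz 2 (by norm_num), leibniz 1 (by norm_num)]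
  simp only [miura, kupershmidtFlow, Finset.sum_range_succ, Finset.sum_range_zero, Nat.choose,
    Nat.reduceAdd, Nat.reduceSub, iteratedDeriv_zero, iteratedDeriv_one]
  push_cast
  ring

end DifferentialPolynomials

lemma kupershmidt_iff_dt_eq_kupershmidtFlow {K : ℝ → ℝ → ℝ} :
    Kupershmidt K ↔ ∀ x t, dt K x t = kupershmidtFlow (fun y => K y t) x := by
  simp only [kupershmidtFlow, ← iterate_dx_apply]
  rfl

lemma kEq_iff_dt_eq_kEquationFlow {k : ℝ → ℝ → ℝ} :
    KEq k ↔ ∀ x t, dt k x t = kEquationFlow (fun y => k y t) x := by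
  simp only [kEquationFlow, ← iterate_dx_apply]
  rfl

lemma dt_miura {K : ℝ → ℝ → ℝ} (hK : ContDiff ℝ 2 (uncurry K)) (x t : ℝ) :
    dt (fun x t => miura (fun y => K y t) x) x t = -dx (dt K) x t - K x t * dt K x t := by
  have hKx : ContDiff ℝ 1 (uncurry (dx K)) :=
    contDiff_dx (by simpa only [one_add_one_eq_two] using hK)
  have hKt := hasDerivAt_dt (hK.differentiable two_ne_zero (x, t))
  have hKxt := hasDerivAt_dt (hKx.differentiable one_ne_zero (x, t))
  rw [← dt_dx_comm hK]
  refine ((hKxt.neg.sub ((hKt.pow 2).const_mul (1 / 2))).congr_deriv ?_).deriv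
  push_cast
  ring

theorem miura_kupershmidt_to_k_equation_general {K : ℝ → ℝ → ℝ}
    (hK : ContDiff ℝ 6 (uncurry K)) (heq : Kupershmidt K) :
    KEq (fun x t => -(dx K x t) - (1 / 2) * (K x t) ^ 2) := by
  rw [kupershmidt_iff_dt_eq_kupershmidtFlow] at heq
  refine kEq_iff_dt_eq_kEquationFlow.2 fun x t => ?_
  have hKt : ContDiff ℝ 6 (fun y => K y t) := hK.comp (contDiff_prodMk_left t)
  have hdx : dx (dt K) x t = deriv (kupershmidtFlow fun y => K y t) x :=
    congrArg (deriv · x) (funext fun y => heq y t)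
  calc dt (fun x t => miura (fun y => K y t) x) x t
      = -dx (dt K) x t - K x t * dt K x t := dt_miura (hK.of_le (by norm_num)) x t
    _ = -deriv (kupershmidtFlow fun y => K y t) x
          - K x t * kupershmidtFlow (fun y => K y t) x := by rw [hdx, heq]
    _ = kEquationFlow (miura fun y => K y t) x := (kEquationFlow_miura hKt x).symm

/-- The Miura transformation `k = -K_x - K²/2` maps the Kupershmidt equation to the
`k`-equation. -/
theorem miura_kupershmidt_to_k_equation
    (K : ℝ → ℝ → ℝ)
    (hK : ContDiff ℝ (⊤ : ℕ∞) (fun p : ℝ × ℝ => K p.1 p.2))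
    (heq : Kupershmidt K) :
    KEq (fun x t => -(dx K x t) - (1/2) * (K x t)^2) := by
  exact miura_kupershmidt_to_k_equation_general (contDiff_infty.1 hK 6) heq
end
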